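/- For every fixed q ≥ 2, limsup_{n→∞} [ M*_q(n;1) · (q−1)·n / q^{n+1} ] ≤ 1; that is, M*_q(n;1) ≲ q^{n+1} / ((q−1)·n) as n → ∞. -/

import Mathlib

/-!
The bound is a sphere-packing argument. Write `D(x)` for the number of positions of `x` at which
two consecutive symbols differ (the number of runs minus one).
Swapping at these positions gives `D(x)` distinct elements of `B(x;1)`, so a code `C` correcting one
transposition satisfies `∑_{x ∈ C} D(x) ≤ q^n` (`sum_changes_le`).

For a uniformly random string of length `m + 1`, `D(x)` is binomial with `m` trials and success
probability `p = (q-1)/q`, and its generating function is `∑_x a^{D(x)} = q (1 + (q-1) a)^m`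
(`sum_pow_changes`). For any threshold `t > 0` and `0 < a ≤ 1` one has
`1 ≤ D(x)/t + a^{D(x) - t}`: the first term covers `D(x) ≥ t`, the second one `D(x) < t`.
Summing over `C` with `t = b p m`, `a = e^{-(1-b)}`, `0 < b < 1`, bounds `|C|` by
`q^n / (b p m) + q^n ρ^m`, where `ρ < 1` is the usual Chernoff factor (`chernoff_lt_one`).
After normalisation the right-hand side tends to `1/b`, and `b` may be taken arbitrarily close
to `1`.
-/

/-- Valid locations (0-indexed) for simultaneous disjoint transpositions in a string of
length `n`: each location `k` swaps positions `k` and `k+1`, and distinct locations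
are at distance at least 2. -/
def ValidLocs (n : ℕ) (K : Finset ℕ) : Prop :=
  (∀ k ∈ K, k + 1 < n) ∧ ∀ k ∈ K, ∀ l ∈ K, k ≠ l → k + 2 ≤ l ∨ l + 2 ≤ k

/-- `y` is the result of applying the transpositions at the locations in `K` to `x`. -/
def ApplyLocs {n q : ℕ} (K : Finset ℕ) (x y : Fin n → Fin q) : Prop :=
  ∀ i : Fin n, y i =
    if h : (i : ℕ) ∈ K ∧ (i : ℕ) + 1 < n then x ⟨(i : ℕ) + 1, h.2⟩
    else if (i : ℕ) ≠ 0 ∧ (i : ℕ) - 1 ∈ K then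
      x ⟨(i : ℕ) - 1, lt_of_le_of_lt (Nat.sub_le _ _) i.isLt⟩
    else x i

/-- `B(x;t)`: the set of strings obtainable from `x` by at most `t` disjoint transpositions. -/
def BallB {n q : ℕ} (t : ℕ) (x : Fin n → Fin q) : Set (Fin n → Fin q) :=
  { y | ∃ K : Finset ℕ, K.card ≤ t ∧ ValidLocs n K ∧ ApplyLocs K x y }

/-- `dist(x,y) = min { t + s : B(x;t) ∩ B(y;s) ≠ ∅ }`, equal to `⊤` if no such `t,s` exist. -/
noncomputable def tdist {n q : ℕ} (x y : Fin n → Fin q) : ℕ∞ :=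
  sInf { d : ℕ∞ | ∃ t s : ℕ, d = ((t + s : ℕ) : ℕ∞) ∧ (BallB t x ∩ BallB s y).Nonempty }

/-- A code `C` corrects `t` transpositions. -/
def Corrects {n q : ℕ} (t : ℕ) (C : Set (Fin n → Fin q)) : Prop :=
  ∀ x ∈ C, ∀ x' ∈ C, x ≠ x' → BallB t x ∩ BallB t x' = ∅

/-- The number of runs of identical consecutive symbols in a string. -/
def runCount {n q : ℕ} (x : Fin n → Fin q) : ℕ :=
  if n = 0 then 0
  else 1 + (Finset.univ.filter (fun i : Fin (n - 1) =>
      x ⟨(i : ℕ), by have := i.isLt; omega⟩ ≠ x ⟨(i : ℕ) + 1, by have := i.isLt; omega⟩)).card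

/-- `M*_q(n;t)`: the maximum cardinality of a code in `Z_q^n` correcting `t` transpositions. -/
noncomputable def Mstar (q n t : ℕ) : ℕ :=
  sSup { m : ℕ | ∃ C : Finset (Fin n → Fin q),
    C.Nonempty ∧ Corrects t (↑C : Set (Fin n → Fin q)) ∧ C.card = m }

open Filter Topology

/-- The number of positions of `x` at which two consecutive symbols differ. -/
def changes {m q : ℕ} (x : Fin (m + 1) → Fin q) : ℕ :=
  (Finset.univ.filter (fun i : Fin m => x i.castSucc ≠ x i.succ)).card

/-- The string `x` with the symbols at positions `i` and `i + 1` exchanged. -/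
def swapAt {m q : ℕ} (x : Fin (m + 1) → Fin q) (i : Fin m) : Fin (m + 1) → Fin q :=
  fun k => x (Equiv.swap i.castSucc i.succ k)

lemma swapAt_mem_ballB {m q : ℕ} (x : Fin (m + 1) → Fin q) (i : Fin m) :
    swapAt x i ∈ BallB 1 x := by
  refine ⟨{(i : ℕ)}, by simp, ⟨?_, ?_⟩, ?_⟩
  · intro k hk
    have := i.isLt
    simp at hk
    omega
  · intro k hk l hl hkl
    simp at hk hl
    omega
  · intro k
    have := i.isLt
    unfold swapAt
    by_cases h1 : k = i.castSucc
    · subst h1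
      simp
      rfl
    · by_cases h2 : k = i.succ
      · subst h2
        simp
        rfl
      · rw [Equiv.swap_apply_of_ne_of_ne h1 h2]
        have hk1 : (k : ℕ) ≠ i := fun h => h1 (Fin.ext h)
        have hk2 : (k : ℕ) ≠ i + 1 := fun h => h2 (Fin.ext (by simpa using h))
        rw [dif_neg (by simp [hk1]), if_neg]
        simp
        omega

lemma swapAt_ne_of_lt {m q : ℕ} (x : Fin (m + 1) → Fin q) {i j : Fin m} (hij : i < j)
    (hi : x i.castSucc ≠ x i.succ) : swapAt x i ≠ swapAt x j := by
  intro h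
  have heq := congrFun h i.castSucc
  have e1 : i.castSucc ≠ j.castSucc := by
    simpa using hij.ne
  have e2 : i.castSucc ≠ j.succ := by
    intro h
    have := congrArg Fin.val h
    have hlt : (i : ℕ) < j := hij
    simp at this
    omega
  simp only [swapAt, Equiv.swap_apply_left, Equiv.swap_apply_of_ne_of_ne e1 e2] at heq
  exact hi heq.symm

/-- Sphere packing: the nontrivial single swaps of distinct codewords are pairwise distinct. -/
lemma sum_changes_le {m q : ℕ} (C : Finset (Fin (m + 1) → Fin q))
    (hC : Corrects 1 (↑C : Set (Fin (m + 1) → Fin q))) :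
    ∑ x ∈ C, changes x ≤ q ^ (m + 1) := by
  classical
  unfold changes
  rw [← Finset.card_sigma]
  calc _ ≤ (Finset.univ : Finset (Fin (m + 1) → Fin q)).card := by
        refine Finset.card_le_card_of_injOn (fun z => swapAt z.1 z.2)
          (fun _ _ => Finset.mem_coe.2 (Finset.mem_univ _)) ?_
        rintro ⟨x, i⟩ hx ⟨y, j⟩ hy hxy
        simp only [Finset.coe_sigma, Set.mem_sigma_iff, Finset.mem_coe, Finset.mem_filter,
          Finset.mem_univ, true_and] at hx hy
        simp only at hxy
        have hxy_eq : x = y := by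
          by_contra hne
          have := hC x hx.1 y hy.1 hne
          have hmem : swapAt x i ∈ BallB 1 x ∩ BallB 1 y :=
            ⟨swapAt_mem_ballB x i, hxy ▸ swapAt_mem_ballB y j⟩
          rw [this] at hmem
          exact hmem
        subst hxy_eq
        rcases lt_trichotomy i j with h | h | h
        · exact absurd hxy (swapAt_ne_of_lt x h hx.2)
        · subst h
          rfl
        · exact absurd hxy.symm (swapAt_ne_of_lt x h hy.2)
    _ = q ^ (m + 1) := by simp

lemma pow_changes {m q : ℕ} (a : ℝ) (x : Fin (m + 1) → Fin q) :
    a ^ changes x = ∏ i : Fin m, if x i.castSucc ≠ x i.succ then a else 1 := by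
  unfold changes
  rw [Finset.prod_ite]
  simp

/-- The generating function of `changes` over all strings with a prescribed first symbol. -/
lemma sum_prod_cons (q : ℕ) (a : ℝ) (m : ℕ) : ∀ c : Fin q,
    ∑ x : Fin m → Fin q, a ^ changes (Fin.cons c x : Fin (m + 1) → Fin q)
      = (1 + ((q : ℝ) - 1) * a) ^ m := by
  induction m with
  | zero =>
    intro c
    simp [changes]
  | succ m ih =>
    intro c
    have key : ∀ (d : Fin q) (y : Fin m → Fin q),
        a ^ changes (Fin.cons c (Fin.cons d y : Fin (m + 1) → Fin q) : Fin (m + 2) → Fin q)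
        = (if c ≠ d then a else 1) * a ^ changes (Fin.cons d y : Fin (m + 1) → Fin q) := by
      intro d y
      rw [pow_changes, pow_changes, Fin.prod_univ_succ]
      congr 1
    rw [← (Fin.consEquiv (fun _ : Fin (m + 1) => Fin q)).sum_comp, Fintype.sum_prod_type]
    change ∑ d : Fin q, ∑ y : Fin m → Fin q, a ^ changes
      (Fin.cons c (Fin.cons d y : Fin (m + 1) → Fin q) : Fin (m + 2) → Fin q) = _
    simp only [key]
    simp only [← Finset.mul_sum, ih, ← Finset.sum_mul]
    rw [pow_succ, mul_comm]
    congr 1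
    rw [← Finset.add_sum_erase _ _ (Finset.mem_univ c)]
    rw [Finset.sum_congr rfl (g := fun _ => a)]
    · have : 1 ≤ q := by have := c.isLt; omega
      simp [Finset.card_erase_of_mem, Nat.cast_sub this]
    · intro d hd
      rw [if_pos (Finset.ne_of_mem_erase hd).symm]

lemma sum_pow_changes (q : ℕ) (a : ℝ) (m : ℕ) :
    ∑ x : Fin (m + 1) → Fin q, a ^ changes x = q * (1 + ((q : ℝ) - 1) * a) ^ m := by
  rw [← (Fin.consEquiv (fun _ : Fin (m + 1) => Fin q)).sum_comp, Fintype.sum_prod_type]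
  change ∑ d : Fin q, ∑ y : Fin m → Fin q, a ^ changes (Fin.cons d y : Fin (m + 1) → Fin q) = _
  simp only [sum_prod_cons]
  simp

/-- Codewords with at least `t` changes are counted by sphere packing, the remaining ones by the
exponential Markov inequality with parameter `s`. -/
lemma card_le {m q : ℕ} (C : Finset (Fin (m + 1) → Fin q))
    (hC : Corrects 1 (↑C : Set (Fin (m + 1) → Fin q))) {s t : ℝ} (hs : 0 ≤ s) (ht : 0 < t) :
    (C.card : ℝ) ≤ (q : ℝ) ^ (m + 1) / t
      + Real.exp (s * t) * (q * (1 + ((q : ℝ) - 1) * Real.exp (-s)) ^ m) := by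
  have h1 : ∀ x ∈ C, (1 : ℝ) ≤ changes x / t + Real.exp (s * t) * Real.exp (-s) ^ changes x := by
    intro x _
    rcases le_or_gt t (changes x) with h | h
    · have : 1 ≤ (changes x : ℝ) / t := (one_le_div ht).2 h
      have : 0 ≤ Real.exp (s * t) * Real.exp (-s) ^ changes x := by positivity
      linarith
    · have h0 : 0 ≤ (changes x : ℝ) / t := by positivity
      have : 1 ≤ Real.exp (s * t) * Real.exp (-s) ^ changes x := by
        rw [← Real.exp_nat_mul, ← Real.exp_add]
        apply Real.one_le_exp
        nlinarith
      linarith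
  have h2 : (∑ x ∈ C, (changes x : ℝ)) ≤ (q : ℝ) ^ (m + 1) := by
    exact_mod_cast sum_changes_le C hC
  calc (C.card : ℝ) = ∑ x ∈ C, (1 : ℝ) := by simp
    _ ≤ ∑ x ∈ C, (changes x / t + Real.exp (s * t) * Real.exp (-s) ^ changes x) :=
        Finset.sum_le_sum h1
    _ = (∑ x ∈ C, (changes x : ℝ)) / t
          + Real.exp (s * t) * ∑ x ∈ C, Real.exp (-s) ^ changes x := by
        rw [Finset.sum_add_distrib, Finset.sum_div, Finset.mul_sum]
    _ ≤ _ := by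
        rw [← sum_pow_changes]
        gcongr
        exact Finset.subset_univ C

/-- The supremum defining `Mstar` is attained. -/
lemma exists_code (q n : ℕ) (hq : 2 ≤ q) : ∃ C : Finset (Fin n → Fin q),
    Corrects 1 (↑C : Set (Fin n → Fin q)) ∧ C.card = Mstar q n 1 := by
  have hmem := Nat.sSup_mem (s := { m : ℕ | ∃ C : Finset (Fin n → Fin q),
    C.Nonempty ∧ Corrects 1 (↑C : Set (Fin n → Fin q)) ∧ C.card = m }) ?_ ?_
  · obtain ⟨C, -, hC, hcard⟩ := hmem
    exact ⟨C, hC, hcard⟩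
  · refine ⟨1, {fun _ => ⟨0, by omega⟩}, by simp, ?_, by simp⟩
    intro x hx y hy hne
    simp at hx hy
    exact absurd (hx.trans hy.symm) hne
  · refine ⟨Fintype.card (Fin n → Fin q), ?_⟩
    rintro _ ⟨C, -, -, rfl⟩
    exact Finset.card_le_univ C

/-- The factor `ρ` governing the lower tail below `b` times the mean, with exponential parameter
`s = 1 - b`. -/
lemma chernoff_lt_one {p b : ℝ} (hp : 0 < p) (hb1 : b < 1) :
    Real.exp ((1 - b) * (b * p)) * (1 - p * (1 - Real.exp (-(1 - b)))) < 1 := by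
  set s := 1 - b with hs
  have hs0 : 0 < s := by linarith
  have h1 : 1 - p * (1 - Real.exp (-s)) ≤ Real.exp (-(p * (1 - Real.exp (-s)))) := by
    have := Real.add_one_le_exp (-(p * (1 - Real.exp (-s))))
    linarith
  have h2 : Real.exp (-s) ≤ 1 / (1 + s) := by
    rw [Real.exp_neg, inv_eq_one_div]
    apply one_div_le_one_div_of_le (by linarith)
    linarith [Real.add_one_le_exp s]
  -- since `b = 1 - s`, this is `(1 - s) (1 + s) < 1`
  have h3 : s * b < 1 - 1 / (1 + s) := by
    have : 1 - 1 / (1 + s) = s / (1 + s) := by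
      field_simp
      ring
    rw [this, lt_div_iff₀ (by linarith)]
    have : b = 1 - s := by linarith
    rw [this]
    nlinarith [mul_pos hs0 (mul_pos hs0 hs0)]
  calc _ ≤ Real.exp (s * (b * p)) * Real.exp (-(p * (1 - Real.exp (-s)))) := by gcongr
    _ = Real.exp (p * (s * b - (1 - Real.exp (-s)))) := by
        rw [← Real.exp_add]
        ring_nf
    _ < 1 := by
        rw [Real.exp_lt_one_iff]
        apply mul_neg_of_pos_of_neg hp
        linarith

/-- The normalised bound for a fixed `b`; the right-hand side tends to `1 / b`. -/
lemma normalized_bound (q : ℕ) (hq : 2 ≤ q) {b : ℝ} (hb0 : 0 < b) (hb1 : b < 1) :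
    ∃ p ρ : ℝ, 0 ≤ ρ ∧ ρ < 1 ∧ ∀ m : ℕ, 0 < m →
      (Mstar q (m + 1) 1 : ℝ) * ((q : ℝ) - 1) * (m + 1 : ℕ) / (q : ℝ) ^ (m + 1 + 1)
        ≤ (1 + 1 / (m : ℝ)) / b + p * (m * ρ ^ m + ρ ^ m) := by
  have hq2 : (2 : ℝ) ≤ q := by exact_mod_cast hq
  have hq0 : (0 : ℝ) < q := by linarith
  set p : ℝ := ((q : ℝ) - 1) / q with hpdef
  have hp : 0 < p := div_pos (by linarith) hq0
  have hp1 : p ≤ 1 := by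
    rw [hpdef, div_le_one hq0]
    linarith
  set ρ : ℝ := Real.exp ((1 - b) * (b * p)) * (1 - p * (1 - Real.exp (-(1 - b)))) with hρ
  have hpos : 0 ≤ 1 - p * (1 - Real.exp (-(1 - b))) := by
    have := Real.exp_pos (-(1 - b))
    nlinarith
  refine ⟨p, ρ, by positivity, chernoff_lt_one hp hb1, ?_⟩
  intro m hm
  have hm0 : (0 : ℝ) < m := by exact_mod_cast hm
  obtain ⟨C, hC, hcard⟩ := exists_code q (m + 1) hq
  have hle := card_le C hC (s := 1 - b) (t := b * p * m) (by linarith) (by positivity)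
  rw [hcard] at hle
  have e1 : 1 + ((q : ℝ) - 1) * Real.exp (-(1 - b))
      = q * (1 - p * (1 - Real.exp (-(1 - b)))) := by
    rw [hpdef]
    field_simp
    ring
  have e2 : Real.exp ((1 - b) * (b * p * m)) = Real.exp ((1 - b) * (b * p)) ^ m := by
    rw [← Real.exp_nat_mul]
    ring_nf
  have e3 : Real.exp ((1 - b) * (b * p * m))
      * (q * (1 + ((q : ℝ) - 1) * Real.exp (-(1 - b))) ^ m) = (q : ℝ) ^ (m + 1) * ρ ^ m := by
    rw [e1, e2, hρ, mul_pow, mul_pow]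
    ring
  rw [e3] at hle
  have e4 : (Mstar q (m + 1) 1 : ℝ) * ((q : ℝ) - 1) * (m + 1 : ℕ) / (q : ℝ) ^ (m + 1 + 1)
      = (Mstar q (m + 1) 1 : ℝ) * (p * (m + 1) / (q : ℝ) ^ (m + 1)) := by
    rw [hpdef]
    push_cast
    field_simp
    ring
  rw [e4]
  calc _ ≤ ((q : ℝ) ^ (m + 1) / (b * p * m) + (q : ℝ) ^ (m + 1) * ρ ^ m)
          * (p * (m + 1) / (q : ℝ) ^ (m + 1)) := by gcongr
    _ = _ := by
        field_simp

theorem stmt12 (q : ℕ) (hq : 2 ≤ q) :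
    Filter.limsup
      (fun n : ℕ => (Mstar q n 1 : ℝ) * ((q : ℝ) - 1) * n / (q : ℝ) ^ (n + 1))
      Filter.atTop ≤ 1 := by
  have hq2 : (2 : ℝ) ≤ q := by exact_mod_cast hq
  refine le_of_forall_gt_imp_ge_of_dense fun c hc => ?_
  have hcobdd : IsCoboundedUnder (· ≤ ·) atTop
      (fun n : ℕ => (Mstar q n 1 : ℝ) * ((q : ℝ) - 1) * n / (q : ℝ) ^ (n + 1)) := by
    refine isCoboundedUnder_le_of_le atTop (x := 0) fun n => ?_
    have : (0 : ℝ) ≤ q - 1 := by linarith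
    positivity
  refine limsup_le_of_le hcobdd ?_
  obtain ⟨b, hb, hb1⟩ := exists_between (inv_lt_one_of_one_lt₀ hc)
  have hb0 : 0 < b := lt_trans (by positivity) hb
  obtain ⟨p, ρ, hρ0, hρ1, hbound⟩ := normalized_bound q hq hb0 hb1
  have hlim : Tendsto (fun m : ℕ => (1 + 1 / (m : ℝ)) / b + p * (m * ρ ^ m + ρ ^ m)) atTop
      (𝓝 ((1 + 0) / b + p * (0 + 0))) :=
    ((tendsto_const_nhds.add tendsto_one_div_atTop_nhds_zero_nat).div_const b).add
      (((tendsto_self_mul_const_pow_of_lt_one hρ0 hρ1).add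
        (tendsto_pow_atTop_nhds_zero_of_lt_one hρ0 hρ1)).const_mul p)
  have hlt : (1 + 0) / b + p * (0 + 0) < c := by
    have : 1 / b < c := by
      rw [one_div]
      exact inv_lt_of_inv_lt₀ (by linarith) hb
    simpa using this
  have hev := (hlim.eventually_lt_const hlt).and (eventually_gt_atTop 0)
  rw [← map_add_atTop_eq_nat 1, eventually_map]
  filter_upwards [hev] with m hm
  exact (hbound m hm.2).trans hm.1.le
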